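/- Vanishing of alternating sums with a redundant element. Let ι be a type, I a Finset of ι, y ∈ I, G an additive commutative group, and f a function from Finsets of ι to G such that f(M ∪ {y}) = f(M) for every M ⊆ I \ {y}. Then Σ_{M ⊆ I} (−1)^{|I|−|M|} · f(M) = 0. -/

import Mathlib

theorem neg_one_pow_card_insert_sub_card {ι R : Type*} [DecidableEq ι] [Monoid R]
    [HasDistribNeg R] {J M : Finset ι} {y : ι} (hy : y ∉ J) (hMJ : M.card ≤ J.card) :
    (-1 : R) ^ ((insert y J).card - M.card) = -(-1) ^ (J.card - M.card) := by
  rw [Finset.card_insert_of_notMem hy, Nat.sub_add_comm hMJ, pow_succ, mul_neg_one]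

theorem sum_powerset_insert_neg_one_pow_card_sub_smul {ι R G : Type*} [DecidableEq ι] [Ring R]
    [AddCommGroup G] [Module R G] {J : Finset ι} {y : ι} (hy : y ∉ J) (f : Finset ι → G) :
    ∑ M ∈ (insert y J).powerset, ((-1 : R) ^ ((insert y J).card - M.card)) • f M =
      ∑ M ∈ J.powerset, ((-1 : R) ^ (J.card - M.card)) • (f (insert y M) - f M) := by
  rw [Finset.sum_powerset_insert hy, ← Finset.sum_add_distrib]
  refine Finset.sum_congr rfl fun M hM => ?_
  have hMJ : M ⊆ J := Finset.mem_powerset.mp hM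
  have hyM : y ∉ M := Finset.notMem_mono hMJ hy
  have hcard : (insert y J).card - (insert y M).card = J.card - M.card := by
    rw [Finset.card_insert_of_notMem hy, Finset.card_insert_of_notMem hyM, Nat.add_sub_add_right]
  rw [neg_one_pow_card_insert_sub_card hy (Finset.card_le_card hMJ), hcard, neg_smul, smul_sub,
    neg_add_eq_sub]

/-- **Vanishing of alternating sums with a redundant element.**
If `y ∈ I` and `f (M ∪ {y}) = f M` for every `M ⊆ I \ {y}`, then
`Σ_{M ⊆ I} (−1)^{|I|−|M|} • f M = 0`. -/
theorem alternating_sum_eq_zero_of_redundant {ι : Type*} [DecidableEq ι]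
    (I : Finset ι) (y : ι) (hy : y ∈ I) {G : Type*} [AddCommGroup G]
    (f : Finset ι → G) (hf : ∀ M ⊆ I \ {y}, f (M ∪ {y}) = f M) :
    ∑ M ∈ I.powerset, ((-1 : ℤ) ^ (I.card - M.card)) • f M = 0 := by
  have hy_notMem : y ∉ I \ {y} := Finset.notMem_sdiff_of_mem_right (Finset.mem_singleton_self y)
  rw [← Finset.insert_sdiff_self_of_mem hy,
    sum_powerset_insert_neg_one_pow_card_sub_smul hy_notMem]
  refine Finset.sum_eq_zero fun M hM => ?_
  have hfM : f (insert y M) = f M := by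
    rw [Finset.insert_eq, Finset.union_comm, hf M (Finset.mem_powerset.mp hM)]
  rw [hfM, sub_self, smul_zero]
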